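/- For every execution e of the call-by-need Storeless Abstract Machine from an initial configuration (t̄₀, ⟨·⟩)_term, the total length of e satisfies |e| = |e|_b + |e|_s + |e|_o ≤ |t̄₀| · (5·|e|_b + 2) + 5·|e|_b + 1; in particular the total number of transitions is bounded by a function linear in both the size |t̄₀| of the initial term and the number |e|_b of beta transitions. -/

import Mathlib

/-!
The bound is an amortized analysis. Each configuration gets a potential such that every transition
other than beta decreases it by at least one, while a beta transition increases it by a bounded
amount (`step_potential`).

The potential rests on three observations. Rule (1) only descends along the left applicative
spine of the code. A pending lookup `E'⟨x⟩[x←E]` is consumed by exactly one substitution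
transition, so it carries weight `1`. An explicit substitution `[x←t]` whose content is not yet an
abstraction is evaluated at most once, because its content is an abstraction from then on; it
carries weight `spine t + 2` in advance. Once the content is an abstraction it carries weight `0`:
looking it up costs rules (2), (3) and one substitution, which the weight `3` of the code
of a `term` configuration pays for, and the machine is then in a `ctxt` configuration, which it
leaves only by a beta transition.

A beta transition turns at most two terms (the body and the argument) into fresh sources of weight.
Both have size at most `|t₀|`, because every term of a reachable configuration does
(`step_bounded`); renaming preserves sizes (`size_eq_of_alphaEq`). So beta transitions are charged
at most `2·|t₀| + 4` each, and the initial potential is at most `|t₀| + 2`.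
-/

namespace SAM

/-- Terms of the λ-calculus with explicit substitutions:
`t ::= x | λx.t | t t | t[x←t]` (`esub t x u` denotes `t[x←u]`). -/
inductive Term : Type
  | var : ℕ → Term
  | lam : ℕ → Term → Term
  | app : Term → Term → Term
  | esub : Term → ℕ → Term → Term
  deriving DecidableEq

namespace Term

/-- Pure terms contain no explicit substitutions. -/
def Pure : Term → Prop
  | var _ => True
  | lam _ t => t.Pure
  | app t u => t.Pure ∧ u.Pure
  | esub _ _ _ => False

/-- Pure values are abstractions of pure terms. -/
def IsPureValue : Term → Prop
  | lam _ t => t.Pure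
  | _ => False

/-- The multiset of free variables of a term. -/
def fv : Term → Multiset ℕ
  | var x => {x}
  | lam x t => t.fv.filter (· ≠ x)
  | app t u => t.fv + u.fv
  | esub t x u => t.fv.filter (· ≠ x) + u.fv

/-- The size of a term. -/
def size : Term → ℕ
  | var _ => 1
  | lam _ t => t.size + 1
  | app t u => t.size + u.size + 1
  | esub t _ u => t.size + u.size + 1

/-- The multiset of variables bound (by λ or by an explicit substitution) in a term. -/
def binders : Term → Multiset ℕ
  | var _ => 0
  | lam x t => x ::ₘ t.binders
  | app t u => t.binders + u.binders
  | esub t x u => x ::ₘ (t.binders + u.binders)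

/-- The multiset of all variables occurring (free, bound or binding) in a term. -/
def vars : Term → Multiset ℕ
  | var x => {x}
  | lam x t => x ::ₘ t.vars
  | app t u => t.vars + u.vars
  | esub t x u => x ::ₘ (t.vars + u.vars)

/-- The number of explicit-substitution constructors occurring in a term. -/
def esubCount : Term → ℕ
  | var _ => 0
  | lam _ t => t.esubCount
  | app t u => t.esubCount + u.esubCount
  | esub t _ u => t.esubCount + u.esubCount + 1

/-- A term is closed if it has no free variables. -/
def Closed (t : Term) : Prop := t.fv = 0

/-- A term is well-named if each variable is bound at most once in it and
no bound variable of it occurs among its free variables. -/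
def WellNamed (t : Term) : Prop :=
  t.binders.Nodup ∧ ∀ x ∈ t.binders, x ∉ t.fv

/-- de Bruijn skeletons, used to define α-equivalence. -/
inductive DB : Type
  | bvar : ℕ → DB
  | fvar : ℕ → DB
  | lam : DB → DB
  | app : DB → DB → DB
  | esub : DB → DB → DB
  deriving DecidableEq

/-- Index of a variable in a list of binders. -/
def dbIndex (x : ℕ) : List ℕ → Option ℕ
  | [] => none
  | y :: Γ => if x = y then some 0 else (dbIndex x Γ).map (· + 1)

/-- Conversion to de Bruijn skeleton, relative to a list of enclosing binders. -/
def toDB : Term → List ℕ → DB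
  | var x, Γ =>
      match dbIndex x Γ with
      | some n => DB.bvar n
      | none => DB.fvar x
  | lam x t, Γ => DB.lam (t.toDB (x :: Γ))
  | app t u, Γ => DB.app (t.toDB Γ) (u.toDB Γ)
  | esub t x u, Γ => DB.esub (t.toDB (x :: Γ)) (u.toDB Γ)

/-- α-equivalence of terms. -/
def AlphaEq (t u : Term) : Prop := t.toDB [] = u.toDB []

/-- The (reflexive) sub-term relation. -/
inductive Subterm : Term → Term → Prop
  | refl (t) : Subterm t t
  | lam {s t} (x) : Subterm s t → Subterm s (Term.lam x t)
  | appL {s t} (u) : Subterm s t → Subterm s (Term.app t u)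
  | appR (t) {s u} : Subterm s u → Subterm s (Term.app t u)
  | esubL {s t} (x) (u) : Subterm s t → Subterm s (Term.esub t x u)
  | esubR (t) (x) {s u} : Subterm s u → Subterm s (Term.esub t x u)

/-- `s` is a sub-term of `t` up to α-equivalence. -/
def SubtermUpToAlpha (s t : Term) : Prop := ∃ s', Subterm s' t ∧ AlphaEq s s'

/-- `v'` is a copy of `v` whose bound variables are renamed to distinct
fresh variables, avoiding the variables in `avoid`. -/
def IsFreshCopy (v v' : Term) (avoid : Multiset ℕ) : Prop :=
  AlphaEq v v' ∧ v'.Pure ∧ v'.binders.Nodup ∧ ∀ x ∈ v'.binders, x ∉ avoid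

end Term

/-- Evaluation contexts:
`E ::= ⟨·⟩ | E t̄ | E[x←t̄] | E'⟨x⟩[x←E]`
(`sub2 E' x E` denotes `E'⟨x⟩[x←E]`; purity of the side terms is
imposed by the well-formedness predicate `ECtx.WF`). -/
inductive ECtx : Type
  | hole : ECtx
  | app : ECtx → Term → ECtx
  | esub : ECtx → ℕ → Term → ECtx
  | sub2 : ECtx → ℕ → ECtx → ECtx
  deriving DecidableEq

namespace ECtx

/-- Well-formedness: all side terms in an evaluation context are pure,
as required by the grammar. -/
def WF : ECtx → Prop
  | hole => True
  | app E t => E.WF ∧ t.Pure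
  | esub E _ t => E.WF ∧ t.Pure
  | sub2 E' _ E => E'.WF ∧ E.WF

/-- Substitution contexts `A ::= ⟨·⟩ | A[x←t̄]`. -/
inductive IsSubst : ECtx → Prop
  | hole : IsSubst ECtx.hole
  | esub {A : ECtx} (x : ℕ) {t : Term} :
      t.Pure → IsSubst A → IsSubst (ECtx.esub A x t)

/-- Plugging a term into the hole of an evaluation context. -/
def plug : ECtx → Term → Term
  | hole, t => t
  | app E u, t => Term.app (E.plug t) u
  | esub E x u, t => Term.esub (E.plug t) x u
  | sub2 E' x E, t => Term.esub (E'.plug (Term.var x)) x (E.plug t)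

/-- Plugging an evaluation context into the hole of an evaluation context. -/
def plugC : ECtx → ECtx → ECtx
  | hole, F => F
  | app E u, F => app (E.plugC F) u
  | esub E x u, F => esub (E.plugC F) x u
  | sub2 E' x E, F => sub2 E' x (E.plugC F)

/-- The multiset `FV_M(E)` of free variables of an evaluation context,
relative to a multiset `M` for the hole. -/
def fv : ECtx → Multiset ℕ → Multiset ℕ
  | hole, M => M
  | app E t, M => E.fv M + t.fv
  | esub E x t, M => (E.fv M).filter (· ≠ x) + t.fv
  | sub2 E' x E, M => (E'.fv {x}).filter (· ≠ x) + E.fv M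

end ECtx

/-- Configurations are tagged `term` or `ctxt`. -/
inductive Tag : Type
  | term | ctxt
  deriving DecidableEq

/-- A configuration of the SAM: a (pure) term, an evaluation context, and a tag. -/
structure Config : Type where
  t : Term
  E : ECtx
  tag : Tag
  deriving DecidableEq

/-- The six rules of the SAM. -/
inductive Rule : Type
  | r1 | r2 | r3 | r4 | r5 | r6
  deriving DecidableEq

/-- Labels of SAM transitions. -/
inductive Label : Type
  | b | s | o
  deriving DecidableEq

/-- The label of each rule: rules (1)–(3) are overhead, rule (4) is beta,
rules (5)–(6) are substitution. -/
def Rule.label : Rule → Label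
  | .r1 => .o
  | .r2 => .o
  | .r3 => .o
  | .r4 => .b
  | .r5 => .s
  | .r6 => .s

/-- The labelled transition system of the call-by-need Storeless Abstract Machine. -/
inductive Step : Config → Rule → Config → Prop
  /-- (1) (t̄ū, E)_term →_o (t̄, E⟨⟨·⟩ū⟩)_term -/
  | r1 {t u : Term} {E : ECtx} :
      t.Pure → u.Pure → E.WF →
      Step ⟨Term.app t u, E, Tag.term⟩ Rule.r1
           ⟨t, E.plugC (ECtx.app ECtx.hole u), Tag.term⟩
  /-- (2) (x, E₁⟨E₂[x←t̄]⟩)_term →_o (t̄, E₁⟨E₂⟨x⟩[x←⟨·⟩]⟩)_term -/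
  | r2 {x : ℕ} {t : Term} {E₁ E₂ : ECtx} :
      t.Pure → E₁.WF → E₂.WF →
      Step ⟨Term.var x, E₁.plugC (ECtx.esub E₂ x t), Tag.term⟩ Rule.r2
           ⟨t, E₁.plugC (ECtx.sub2 E₂ x ECtx.hole), Tag.term⟩
  /-- (3) (v̄, E)_term →_o (v̄, E)_ctxt -/
  | r3 {v : Term} {E : ECtx} :
      v.IsPureValue → E.WF →
      Step ⟨v, E, Tag.term⟩ Rule.r3 ⟨v, E, Tag.ctxt⟩
  /-- (4) (λx.t̄, E⟨A⟨·⟩ū⟩)_ctxt →_b (t̄, E⟨A⟨⟨·⟩[x←ū]⟩⟩)_term -/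
  | r4 {x : ℕ} {t u : Term} {E A : ECtx} :
      t.Pure → u.Pure → E.WF → A.IsSubst →
      Step ⟨Term.lam x t, E.plugC (ECtx.app A u), Tag.ctxt⟩ Rule.r4
           ⟨t, E.plugC (A.plugC (ECtx.esub ECtx.hole x u)), Tag.term⟩
  /-- (5) (v̄, E₁⟨E₂⟨x⟩[x←A]⟩)_ctxt →_s (v̄^≈, E₁⟨A⟨E₂[x←v̄]⟩⟩)_ctxt, if x ∈ FV_∅(E₂),
  where v̄^≈ is a fresh copy of v̄ avoiding all variables of the configuration. -/
  | r5 {x : ℕ} {v v' : Term} {E₁ E₂ A : ECtx} :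
      v.IsPureValue → E₁.WF → E₂.WF → A.IsSubst →
      x ∈ E₂.fv 0 →
      v.IsFreshCopy v' ((E₁.plugC (ECtx.sub2 E₂ x A)).plug v).vars →
      Step ⟨v, E₁.plugC (ECtx.sub2 E₂ x A), Tag.ctxt⟩ Rule.r5
           ⟨v', E₁.plugC (A.plugC (ECtx.esub E₂ x v)), Tag.ctxt⟩
  /-- (6) (v̄, E₁⟨E₂⟨x⟩[x←A]⟩)_ctxt →_s (v̄, E₁⟨A⟨E₂⟩⟩)_ctxt, if x ∉ FV_∅(E₂). -/
  | r6 {x : ℕ} {v : Term} {E₁ E₂ A : ECtx} :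
      v.IsPureValue → E₁.WF → E₂.WF → A.IsSubst →
      x ∉ E₂.fv 0 →
      Step ⟨v, E₁.plugC (ECtx.sub2 E₂ x A), Tag.ctxt⟩ Rule.r6
           ⟨v, E₁.plugC (A.plugC E₂), Tag.ctxt⟩

/-- A finite execution: a sequence of SAM transitions, recorded by its trace of rules. -/
inductive Exec : Config → List Rule → Config → Prop
  | nil (c : Config) : Exec c [] c
  | cons {c c' c'' : Config} {r : Rule} {rs : List Rule} :
      Step c r c' → Exec c' rs c'' → Exec c (r :: rs) c''

/-- `|e|_ℓ`: the number of transitions labelled `ℓ` occurring in an execution trace. -/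
def labelCount (e : List Rule) (ℓ : Label) : ℕ := (e.map Rule.label).count ℓ

/-- A term may serve as the initial term of an initial configuration:
it is pure, closed and well-named. -/
def InitialTerm (t : Term) : Prop := t.Pure ∧ t.Closed ∧ t.WellNamed

/-- A configuration is reachable if some execution from an initial configuration ends at it. -/
def Reachable (c : Config) : Prop :=
  ∃ (t₀ : Term) (e : List Rule),
    InitialTerm t₀ ∧ Exec ⟨t₀, ECtx.hole, Tag.term⟩ e c

/-- The number of maximal subsequences of consecutive transitions consisting
solely of instances of rule (1) in a trace (each such run is counted at its
last element). -/
def countR1Runs : List Rule → ℕ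
  | [] => 0
  | [r] => if r = Rule.r1 then 1 else 0
  | r :: r' :: rs =>
      (if r = Rule.r1 ∧ r' ≠ Rule.r1 then 1 else 0) + countR1Runs (r' :: rs)

/-! ### Sizes and renaming -/

/-- The size of a de Bruijn skeleton, counted as for terms. -/
def dbSize : Term.DB → ℕ
  | .bvar _ => 1
  | .fvar _ => 1
  | .lam t => dbSize t + 1
  | .app t u => dbSize t + dbSize u + 1
  | .esub t u => dbSize t + dbSize u + 1

lemma dbSize_toDB (t : Term) (Γ : List ℕ) : dbSize (t.toDB Γ) = t.size := by
  induction t generalizing Γ with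
  | var x =>
    simp only [Term.toDB, Term.size]
    split <;> rfl
  | lam x t ih => simp [Term.toDB, Term.size, dbSize, ih]
  | app t u iht ihu => simp [Term.toDB, Term.size, dbSize, iht, ihu]
  | esub t x u iht ihu => simp [Term.toDB, Term.size, dbSize, iht, ihu]

lemma size_eq_of_alphaEq {t u : Term} (h : t.AlphaEq u) : t.size = u.size := by
  rw [← dbSize_toDB t [], ← dbSize_toDB u [], h]

/-- All side terms of an evaluation context have size at most `N`. -/
def ctxBounded (N : ℕ) : ECtx → Prop
  | .hole => True
  | .app E t => ctxBounded N E ∧ t.size ≤ N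
  | .esub E _ t => ctxBounded N E ∧ t.size ≤ N
  | .sub2 E' _ E => ctxBounded N E' ∧ ctxBounded N E

lemma ctxBounded_plugC (N : ℕ) (E F : ECtx) :
    ctxBounded N (E.plugC F) ↔ ctxBounded N E ∧ ctxBounded N F := by
  induction E with
  | hole => simp [ECtx.plugC, ctxBounded]
  | app E t ih => simp only [ECtx.plugC, ctxBounded, ih]; tauto
  | esub E x t ih => simp only [ECtx.plugC, ctxBounded, ih]; tauto
  | sub2 E' x E _ ih => simp only [ECtx.plugC, ctxBounded, ih]; tauto

/-- The code and all side terms of a configuration have size at most `N`. -/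
def Bounded (N : ℕ) (c : Config) : Prop := c.t.size ≤ N ∧ ctxBounded N c.E

lemma step_bounded {N : ℕ} {c c' : Config} {r : Rule} (h : Step c r c') (hc : Bounded N c) :
    Bounded N c' := by
  cases h with
  | r5 _ _ _ _ _ hcopy =>
    have := size_eq_of_alphaEq hcopy.1
    simp only [Bounded, ctxBounded_plugC, ctxBounded] at hc ⊢
    refine ⟨by omega, ?_⟩
    tauto
  | _ =>
    simp only [Bounded, ctxBounded_plugC, ctxBounded, Term.size] at hc ⊢
    grind

/-! ### The potential -/

/-- The number of applications on the left spine of a term, that is, the number of consecutive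
instances of rule (1) that it gives rise to. -/
def spine : Term → ℕ
  | .app t _ => spine t + 1
  | _ => 0

lemma spine_lt_size (t : Term) : spine t + 1 ≤ t.size := by
  induction t <;> simp only [spine, Term.size] <;> omega

/-- The weight of the content of an explicit substitution `[x←t]`: zero once `t` is an
abstraction. -/
def contentWeight : Term → ℕ
  | .lam _ _ => 0
  | t => spine t + 2

/-- The weight of the code of a `term` configuration. -/
def codeWeight : Term → ℕ
  | .lam _ _ => 1
  | t => spine t + 3

/-- The weight of an evaluation context: its explicit substitutions contribute the weight of their
contents, and its pending lookups contribute one each. -/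
def ctxWeight : ECtx → ℕ
  | .hole => 0
  | .app E _ => ctxWeight E
  | .esub E _ t => ctxWeight E + contentWeight t
  | .sub2 E' _ E => ctxWeight E' + ctxWeight E + 1

lemma ctxWeight_plugC (E F : ECtx) : ctxWeight (E.plugC F) = ctxWeight E + ctxWeight F := by
  induction E with
  | hole => simp [ECtx.plugC, ctxWeight]
  | app E t ih => simp only [ECtx.plugC, ctxWeight, ih]
  | esub E x t ih => simp only [ECtx.plugC, ctxWeight, ih]; omega
  | sub2 E' x E _ ih => simp only [ECtx.plugC, ctxWeight, ih]; omega

/-- The potential of a configuration; the code counts only in `term` configurations. -/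
def potential (c : Config) : ℕ :=
  ctxWeight c.E + match c.tag with
    | .term => codeWeight c.t
    | .ctxt => 0

lemma contentWeight_le (t : Term) : contentWeight t ≤ t.size + 1 := by
  have := spine_lt_size t
  cases t <;> simp only [contentWeight] <;> omega

lemma codeWeight_le (t : Term) : codeWeight t ≤ t.size + 2 := by
  have := spine_lt_size t
  cases t <;> simp only [codeWeight] <;> omega

/-- The code after rule (1) has a strictly smaller weight; if it is an abstraction,
the drop is larger. -/
lemma codeWeight_app (t u : Term) : codeWeight t + 1 ≤ codeWeight (.app t u) := by
  cases t <;> simp [codeWeight, spine]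

/-- The inequality behind rule (2): the weight of the variable and of the content pays for the
transition, for the pending lookup it creates, and for the content as new code. It is tight both
when the content is an abstraction and when it is not. -/
lemma codeWeight_lookup (x : ℕ) (t : Term) :
    codeWeight t + 2 ≤ codeWeight (.var x) + contentWeight t := by
  cases t <;> simp only [codeWeight, contentWeight, spine] <;> omega

/-- A non-beta transition decreases the potential, and a beta transition increases it by at most
`2·N + 3`, where `N` bounds the sizes of the terms of the configuration. -/
lemma step_potential {N : ℕ} {c c' : Config} {r : Rule} (h : Step c r c') (hc : Bounded N c) :
    potential c' + 1 ≤ potential c + (if r.label = Label.b then 2 * N + 4 else 0) := by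
  cases h with
  | @r1 t u E =>
    have := codeWeight_app t u
    simp [potential, ctxWeight_plugC, ctxWeight, Rule.label]
    omega
  | @r2 x t E₁ E₂ =>
    have := codeWeight_lookup x t
    simp [potential, ctxWeight_plugC, ctxWeight, Rule.label]
    omega
  | @r3 v E hv =>
    cases v <;> simp_all [potential, Term.IsPureValue, codeWeight, Rule.label]
  | @r4 x t u E A =>
    have ht := codeWeight_le t
    have hu := contentWeight_le u
    simp only [Bounded, ctxBounded_plugC, ctxBounded, Term.size] at hc
    simp [potential, ctxWeight_plugC, ctxWeight, Rule.label]
    omega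
  | @r5 x v v' E₁ E₂ A hv =>
    cases v <;>
      simp_all [potential, Term.IsPureValue, ctxWeight_plugC, ctxWeight, contentWeight, Rule.label]
    omega
  | @r6 x v E₁ E₂ A =>
    simp [potential, ctxWeight_plugC, ctxWeight, Rule.label]
    omega

lemma exec_length_le {N : ℕ} {c c' : Config} {e : List Rule} (h : Exec c e c')
    (hc : Bounded N c) :
    e.length ≤ potential c + labelCount e Label.b * (2 * N + 4) := by
  induction h with
  | nil => simp
  | @cons c₁ c₂ c₃ r rs hs _ ih =>
    have hlen := ih (step_bounded hs hc)
    have hpot := step_potential hs hc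
    simp only [labelCount, List.map_cons, List.count_cons, List.length_cons, beq_iff_eq] at hlen ⊢
    split_ifs at hpot ⊢
    · rw [Nat.add_mul]
      omega
    · simp only [Nat.add_zero]
      omega

lemma length_eq_labelCount (e : List Rule) :
    e.length = labelCount e Label.b + labelCount e Label.s + labelCount e Label.o := by
  induction e with
  | nil => rfl
  | cons r rs ih =>
    simp only [labelCount, List.map_cons, List.count_cons, List.length_cons] at ih ⊢
    cases r <;> simp [Rule.label] <;> omega

/-- For every execution `e` from an initial configuration
`(t̄₀, ⟨·⟩)_term`, `|e| = |e|_b + |e|_s + |e|_o ≤ |t̄₀|·(5·|e|_b + 2) + 5·|e|_b + 1`: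
the total number of transitions is linear in both `|t̄₀|` and `|e|_b`. -/
theorem total_length_bound
    (t₀ : Term) (h₀ : InitialTerm t₀)
    (c : Config) (e : List Rule)
    (hexec : Exec ⟨t₀, ECtx.hole, Tag.term⟩ e c) :
    e.length = labelCount e Label.b + labelCount e Label.s + labelCount e Label.o ∧
    e.length ≤ t₀.size * (5 * labelCount e Label.b + 2) + 5 * labelCount e Label.b + 1 := by
  refine ⟨length_eq_labelCount e, ?_⟩
  have hlen := exec_length_le (N := t₀.size) hexec ⟨le_rfl, trivial⟩
  have hpot : potential ⟨t₀, ECtx.hole, Tag.term⟩ ≤ t₀.size + 2 := by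
    simpa [potential, ctxWeight] using codeWeight_le t₀
  have hsize := spine_lt_size t₀
  nlinarith [Nat.zero_le (labelCount e Label.b * t₀.size)]

end SAM
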